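/- Let n : (0,ε₀) → ℕ satisfy n(ε)/log(1/ε) → ∞ as ε↓0, let a : (0,ε₀) → (0,∞) satisfy a(ε) → ∞ as ε↓0, and set m(ε) = ⌊min(n(ε)/2, a(ε)·log(1/ε))⌋. Suppose each P_k(ε), 1 ≤ k ≤ n(ε), is stochastic, P̃ is an irreducible and aperiodic stochastic matrix with stationary distribution π̃, and sup_{0 ≤ k ≤ m(ε)} ‖P_{n(ε)−k}(ε) − (P̃ − ε k P̃⁽¹⁾)‖ = O(ε² m(ε)²) as ε↓0. Then for every probability row vector μ and column vector r, μ P_1(ε)P_2(ε)⋯P_{n(ε)}(ε) r = π̃ r − ε π̃ P̃⁽¹⁾ (I − P̃ + Π̃)^{−2} P̃ r + O(ε² m(ε)³) as ε↓0. -/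

import Mathlib

open Matrix Topology Filter

/-- The matrix norm ‖A‖ = max_x Σ_y |A(x,y)|. -/
noncomputable def matNorm {T : Type*} [Fintype T] (A : Matrix T T ℝ) : ℝ :=
  ⨆ x, ∑ y, |A x y|

/-- A square matrix is stochastic if all entries are nonnegative and every row sums to 1. -/
def IsStochastic {T : Type*} [Fintype T] (P : Matrix T T ℝ) : Prop :=
  (∀ x y, 0 ≤ P x y) ∧ ∀ x, ∑ y, P x y = 1

/-- The ordered product P 1 * P 2 * ⋯ * P j. -/
noncomputable def prodP {T : Type*} [Fintype T] [DecidableEq T]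
    (P : ℕ → Matrix T T ℝ) (j : ℕ) : Matrix T T ℝ :=
  ((List.range j).map fun i => P (i + 1)).prod

/-- m(ε) = ⌊min(n(ε)/2, a(ε)·log(1/ε))⌋. -/
noncomputable def mcut (n : ℝ → ℕ) (a : ℝ → ℝ) (ε : ℝ) : ℕ :=
  ⌊min ((n ε : ℝ) / 2) (a ε * Real.log (1/ε))⌋₊

/-!
Write `T` for the limiting transition matrix, `E` for the matrix whose rows are all equal to its
stationary distribution, and let `L k` be the product of all transitions but the last `k`. Each
stochastic matrix fixes `E`, so replacing the transitions by `T` one at a time from the end gives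
`L j - E = L (j + p) (T ^ p - E) + ∑ i < p, L (j + i + 1) (Q (j + i) - T) (T ^ i - E)`,
and the weights `T ^ i - E` decay geometrically by Doeblin's contraction. A crude use of this
identity bounds `L j - E` by `(j + 1) ε` up to the error; a second use at `j = 0`, with
`Q j - T ≈ -ε j T₁` and `L (j + 1)` replaced by `E`, leaves `-ε E T₁ ∑ j (T ^ j - E)`. Summation by
parts with the fundamental matrix `Z = (1 - T + E)⁻¹` turns the sum into `Z ^ 2 (T - E)`, and the
spurious term `ε E T₁ E` is itself of the order of the error.
-/

open Finset Asymptotics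

section FundamentalInverse

variable {R : Type*} [Ring R] {T E Z : R}

theorem proj_mul_pow (hET : E * T = E) (k : ℕ) : E * T ^ k = E := by
  induction k with
  | zero => rw [pow_zero, mul_one]
  | succ k ih => rw [pow_succ, ← mul_assoc, ih, hET]

theorem one_sub_add_proj_mul_pow_sub_proj (hTE : T * E = E) (hET : E * T = E) (hEE : E * E = E)
    (k : ℕ) : (1 - T + E) * (T ^ k - E) = (T ^ k - E) - (T ^ (k + 1) - E) := by
  rw [add_mul, sub_mul, one_mul, mul_sub T, mul_sub E, hTE, hEE, proj_mul_pow hET, pow_succ']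
  abel

theorem one_sub_add_proj_mul_proj_add_sum (hTE : T * E = E) (hET : E * T = E) (hEE : E * E = E)
    (k : ℕ) :
    (1 - T + E) * (E + ∑ j ∈ range k, (T ^ j - E)) = 1 - (T ^ k - E) := by
  rw [mul_add, mul_sum,
    sum_congr rfl fun j _ ↦ one_sub_add_proj_mul_pow_sub_proj hTE hET hEE j,
    sum_range_sub' (fun j ↦ T ^ j - E), add_mul, sub_mul, one_mul, hTE, hEE, pow_zero]
  abel

theorem leftInverse_mul_proj (hTE : T * E = E) (hEE : E * E = E) (hZ : Z * (1 - T + E) = 1) :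
    Z * E = E := by
  have hfix : (1 - T + E) * E = E := by rw [add_mul, sub_mul, one_mul, hTE, hEE, sub_self, zero_add]
  calc Z * E = Z * ((1 - T + E) * E) := by rw [hfix]
    _ = E := by rw [← mul_assoc, hZ, one_mul]

theorem sum_smul_pow_sub_proj [Algebra ℝ R] (hTE : T * E = E) (hET : E * T = E) (hEE : E * E = E)
    (hZ : Z * (1 - T + E) = 1) (m : ℕ) :
    ∑ j ∈ range m, (j : ℝ) • (T ^ j - E) =
      Z ^ 2 * ((T - E) - ((m : ℝ) • (T ^ m - E) - ((m : ℝ) - 1) • (T ^ (m + 1) - E))) := by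
  have hshift := one_sub_add_proj_mul_pow_sub_proj hTE hET hEE
  have hsq : (1 - T + E) * ((1 - T + E) * ∑ j ∈ range m, (j : ℝ) • (T ^ j - E)) =
      (T - E) - ((m : ℝ) • (T ^ m - E) - ((m : ℝ) - 1) • (T ^ (m + 1) - E)) := by
    induction m with
    | zero => simp
    | succ m ih =>
      rw [sum_range_succ, mul_add, mul_add, ih, mul_smul_comm, mul_smul_comm, hshift, mul_sub,
        hshift, hshift]
      push_cast
      module
  rw [← hsq, pow_two, mul_assoc, ← mul_assoc Z (1 - T + E), hZ, one_mul, ← mul_assoc, hZ, one_mul]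

theorem mul_sum_smul_pow_sub_proj [Algebra ℝ R] (hTE : T * E = E) (hET : E * T = E)
    (hEE : E * E = E) (hZ : Z * (1 - T + E) = 1) (X : R) (m : ℕ) :
    X * ∑ j ∈ range m, (j : ℝ) • (T ^ j - E) =
      X * Z ^ 2 * T - X * E -
        X * Z ^ 2 * ((m : ℝ) • (T ^ m - E) - ((m : ℝ) - 1) • (T ^ (m + 1) - E)) := by
  have hZE := leftInverse_mul_proj hTE hEE hZ
  have hZZE : Z ^ 2 * E = E := by rw [pow_two, mul_assoc, hZE, hZE]
  rw [sum_smul_pow_sub_proj hTE hET hEE hZ, ← mul_assoc, mul_sub, mul_sub (X * Z ^ 2) T E,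
    mul_assoc X (Z ^ 2) E, hZZE]

end FundamentalInverse

theorem norm_sub_le_of_norm_sub_sub_smul_le {V : Type*} [SeminormedAddCommGroup V]
    [NormedSpace ℝ V] {A T T₁ : V} {t e : ℝ} (ht : 0 ≤ t) (h : ‖A - (T - t • T₁)‖ ≤ e) :
    ‖A - T‖ ≤ t * ‖T₁‖ + e := by
  calc ‖A - T‖ = ‖A - (T - t • T₁) - t • T₁‖ := by rw [sub_sub, sub_add_cancel]
    _ ≤ e + t * ‖T₁‖ := by
      refine (norm_sub_le _ _).trans (add_le_add h ?_)
      rw [norm_smul, Real.norm_of_nonneg ht]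
    _ = t * ‖T₁‖ + e := add_comm _ _

section GeometricDecay

variable {V : Type*} [SeminormedAddCommGroup V] {B : ℕ → V} {C ρ : ℝ} {m : ℕ}

theorem sum_mul_norm_mul_norm_le (hB : ∀ k, ‖B k‖ ≤ C * ρ ^ k) (hρ : 0 ≤ ρ) (m : ℕ) :
    ∑ j ∈ range m, j * ‖B j‖ * ‖B (m - (j + 1))‖ ≤
      C ^ 2 * ((m : ℝ) ^ 2 * ρ ^ (m - 1)) := by
  have hC : 0 ≤ C := by simpa using (norm_nonneg _).trans (hB 0)
  have hterm : ∀ j ∈ range m, j * ‖B j‖ * ‖B (m - (j + 1))‖ ≤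
      m * (C ^ 2 * ρ ^ (m - 1)) := fun j hj ↦ by
    have hj := mem_range.1 hj
    calc j * ‖B j‖ * ‖B (m - (j + 1))‖
        ≤ m * (C * ρ ^ j) * (C * ρ ^ (m - (j + 1))) := by
          gcongr
          · exact hB j
          · exact hB _
      _ = m * (C ^ 2 * ρ ^ (m - 1)) := by
        rw [show m - 1 = j + (m - (j + 1)) by lia, pow_add]
        ring
  calc ∑ j ∈ range m, j * ‖B j‖ * ‖B (m - (j + 1))‖
      ≤ #(range m) • (m * (C ^ 2 * ρ ^ (m - 1))) := sum_le_card_nsmul _ _ _ hterm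
    _ = C ^ 2 * ((m : ℝ) ^ 2 * ρ ^ (m - 1)) := by
      rw [card_range, nsmul_eq_mul]
      ring

theorem norm_smul_sub_smul_succ_le [NormedSpace ℝ V]
    (hB : ∀ k, ‖B k‖ ≤ C * ρ ^ k) (hρ : 0 ≤ ρ) (hρ' : ρ ≤ 1) (hm : 1 ≤ m) :
    ‖(m : ℝ) • B m - ((m : ℝ) - 1) • B (m + 1)‖ ≤
      2 * C * ((m : ℝ) ^ 2 * ρ ^ (m - 1)) := by
  have hm' : (1 : ℝ) ≤ m := by exact_mod_cast hm
  have hC : 0 ≤ C := by simpa using (norm_nonneg _).trans (hB 0)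
  have hmono : ∀ k, m - 1 ≤ k → ‖B k‖ ≤ C * ρ ^ (m - 1) := fun k hk ↦
    (hB k).trans (mul_le_mul_of_nonneg_left (pow_le_pow_of_le_one hρ hρ' hk) hC)
  calc ‖(m : ℝ) • B m - ((m : ℝ) - 1) • B (m + 1)‖
      ≤ m * ‖B m‖ + (m - 1) * ‖B (m + 1)‖ := by
        refine (norm_sub_le _ _).trans_eq ?_
        rw [norm_smul, norm_smul, Real.norm_of_nonneg (by linarith),
          Real.norm_of_nonneg (by linarith)]
    _ ≤ m * (C * ρ ^ (m - 1)) + (m - 1) * (C * ρ ^ (m - 1)) := by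
      have : (0 : ℝ) ≤ m - 1 := by linarith
      gcongr
      · exact hmono m (by lia)
      · exact hmono (m + 1) (by lia)
    _ = (2 * m - 1) * (C * ρ ^ (m - 1)) := by ring
    _ ≤ 2 * (m : ℝ) ^ 2 * (C * ρ ^ (m - 1)) := by
      gcongr
      nlinarith
    _ = 2 * C * ((m : ℝ) ^ 2 * ρ ^ (m - 1)) := by ring

theorem exists_forall_sum_sq_mul_norm_le (hB : ∀ k, ‖B k‖ ≤ C * ρ ^ k)
    (hρ : 0 ≤ ρ) (hρ' : ρ < 1) :
    ∃ K, ∀ p, ∑ i ∈ range p, ((i : ℝ) + 1) ^ 2 * ‖B i‖ ≤ K := by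
  have hsummable : Summable fun i : ℕ ↦ ((i : ℝ) + 1) ^ 2 * ‖B i‖ := by
    have : 0 ≤ C := by simpa using (norm_nonneg _).trans (hB 0)
    have hρ_norm : ‖ρ‖ < 1 := by rwa [Real.norm_of_nonneg hρ]
    have hpow := summable_pow_mul_geometric_of_norm_lt_one (R := ℝ) (r := ρ)
    refine Summable.of_nonneg_of_le (fun i ↦ by positivity) (fun i ↦ ?_)
      ((((hpow 2 hρ_norm).add (hpow 0 hρ_norm)).mul_left (2 * C)))
    calc ((i : ℝ) + 1) ^ 2 * ‖B i‖ ≤ (2 * ((i : ℝ) ^ 2 + 1)) * (C * ρ ^ i) := by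
          gcongr
          · nlinarith [sq_nonneg ((i : ℝ) - 1)]
          · exact hB i
      _ = 2 * C * ((i : ℝ) ^ 2 * ρ ^ i + (i : ℝ) ^ 0 * ρ ^ i) := by ring
  exact ⟨_, fun p ↦ hsummable.sum_le_tsum _ fun i _ ↦ by positivity⟩

end GeometricDecay

/-- Partial products of an inhomogeneous chain seen from its final time: `Q k` is the transition
`k` steps before the end and `L k` the product of all transitions preceding the last `k`. Every
factor fixes the projection `E`, as each stochastic matrix fixes a matrix with equal rows. -/
structure IsBackwardProduct {R : Type*} [NormedRing R] (E : R) (L Q : ℕ → R) (m : ℕ) : Prop where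
  eq_succ_mul : ∀ k < m, L k = L (k + 1) * Q k
  norm_le_one : ∀ k ≤ m, ‖L k‖ ≤ 1
  mul_proj : ∀ k ≤ m, L k * E = E
  factor_mul_proj : ∀ k < m, Q k * E = E

namespace IsBackwardProduct

variable {R : Type*} [NormedRing R] {T T₁ E Z : R} {L Q : ℕ → R} {m : ℕ} {ε e K C ρ : ℝ}

theorem sub_proj_eq (h : IsBackwardProduct E L Q m) (hTE : T * E = E) {j p : ℕ} (hjp : j + p ≤ m) :
    L j - E = L (j + p) * (T ^ p - E) +
      ∑ i ∈ range p, L (j + i + 1) * ((Q (j + i) - T) * (T ^ i - E)) := by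
  have hterm : ∀ i ∈ range p, L (j + i + 1) * ((Q (j + i) - T) * (T ^ i - E)) =
      L (j + i) * T ^ i - L (j + (i + 1)) * T ^ (i + 1) := fun i hi ↦ by
    have hi := mem_range.1 hi
    have hfix : (Q (j + i) - T) * E = 0 := by
      rw [sub_mul, h.factor_mul_proj _ (by lia), hTE, sub_self]
    rw [mul_sub, hfix, sub_zero, ← mul_assoc, mul_sub, ← h.eq_succ_mul _ (by lia), sub_mul,
      pow_succ', ← mul_assoc, add_assoc]
  rw [sum_congr rfl hterm, sum_range_sub' (fun i ↦ L (j + i) * T ^ i), mul_sub,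
    h.mul_proj _ hjp, add_zero, pow_zero, mul_one]
  abel

variable [NormedAlgebra ℝ R]

theorem norm_mul_factor_sub_mul_le (h : IsBackwardProduct E L Q m) (hε : 0 ≤ ε) (he : 0 ≤ e)
    (hQ : ∀ k < m, ‖Q k - (T - (ε * k) • T₁)‖ ≤ e) (X : R) {j i : ℕ} (hji : j + i < m) :
    ‖L (j + i + 1) * ((Q (j + i) - T) * X)‖ ≤
      (j + 1) * (ε * ‖T₁‖ + e) * (((i : ℝ) + 1) ^ 2 * ‖X‖) := by
  have hindex : ((j + i : ℕ) : ℝ) ≤ (j + 1) * ((i : ℝ) + 1) ^ 2 := by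
    push_cast
    nlinarith [mul_nonneg j.cast_nonneg (i.cast_nonneg (α := ℝ))]
  have hone : (1 : ℝ) ≤ (j + 1) * ((i : ℝ) + 1) ^ 2 :=
    one_le_mul_of_one_le_of_one_le (by simp) (one_le_pow₀ (by simp))
  calc ‖L (j + i + 1) * ((Q (j + i) - T) * X)‖
      ≤ ‖L (j + i + 1)‖ * (‖Q (j + i) - T‖ * ‖X‖) :=
        norm_mul_le_of_le le_rfl (norm_mul_le _ _)
    _ ≤ 1 * ((ε * (j + i : ℕ) * ‖T₁‖ + e) * ‖X‖) := by
      gcongr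
      · exact h.norm_le_one _ (by lia)
      · exact norm_sub_le_of_norm_sub_sub_smul_le (by positivity) (hQ _ hji)
    _ = ((j + i : ℕ) * (ε * ‖T₁‖) + 1 * e) * ‖X‖ := by ring
    _ ≤ ((j + 1) * ((i : ℝ) + 1) ^ 2 * (ε * ‖T₁‖) + (j + 1) * ((i : ℝ) + 1) ^ 2 * e) * ‖X‖ := by
      gcongr
    _ = (j + 1) * (ε * ‖T₁‖ + e) * (((i : ℝ) + 1) ^ 2 * ‖X‖) := by ring

theorem norm_sub_proj_le (h : IsBackwardProduct E L Q m) (hTE : T * E = E) (hε : 0 ≤ ε)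
    (he : 0 ≤ e) (hQ : ∀ k < m, ‖Q k - (T - (ε * k) • T₁)‖ ≤ e)
    (hK : ∀ p, ∑ i ∈ range p, ((i : ℝ) + 1) ^ 2 * ‖T ^ i - E‖ ≤ K) {j : ℕ} (hj : j ≤ m) :
    ‖L j - E‖ ≤ ‖T ^ (m - j) - E‖ + (j + 1) * (ε * ‖T₁‖ + e) * K := by
  have hfirst : ‖L m * (T ^ (m - j) - E)‖ ≤ ‖T ^ (m - j) - E‖ :=
    (norm_mul_le _ _).trans (mul_le_of_le_one_left (norm_nonneg _) (h.norm_le_one m le_rfl))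
  calc ‖L j - E‖ ≤ ‖L m * (T ^ (m - j) - E)‖ +
        ‖∑ i ∈ range (m - j), L (j + i + 1) * ((Q (j + i) - T) * (T ^ i - E))‖ := by
        rw [h.sub_proj_eq hTE (Nat.add_sub_of_le hj).le, Nat.add_sub_of_le hj]
        exact norm_add_le _ _
    _ ≤ ‖T ^ (m - j) - E‖ + ∑ i ∈ range (m - j),
        (j + 1) * (ε * ‖T₁‖ + e) * (((i : ℝ) + 1) ^ 2 * ‖T ^ i - E‖) :=
      add_le_add hfirst <| norm_sum_le_of_le _ fun i hi ↦
        h.norm_mul_factor_sub_mul_le hε he hQ _ (by have := mem_range.1 hi; lia)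
    _ ≤ ‖T ^ (m - j) - E‖ + (j + 1) * (ε * ‖T₁‖ + e) * K := by
      rw [← mul_sum]
      gcongr
      exact hK _

theorem sub_proj_add_smul_sum_eq (h : IsBackwardProduct E L Q m) (hTE : T * E = E) :
    L 0 - E + ε • (E * T₁ * ∑ j ∈ range m, (j : ℝ) • (T ^ j - E)) =
      L m * (T ^ m - E) +
        ∑ j ∈ range m, L (j + 1) * ((Q j - (T - (ε * j) • T₁)) * (T ^ j - E)) -
        ∑ j ∈ range m, (ε * j) • ((L (j + 1) - E) * T₁ * (T ^ j - E)) := by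
  have hterm : ∀ j ∈ range m, L (j + 1) * ((Q j - T) * (T ^ j - E)) =
      L (j + 1) * ((Q j - (T - (ε * j) • T₁)) * (T ^ j - E)) -
        (ε * j) • ((L (j + 1) - E) * T₁ * (T ^ j - E)) -
        (ε * j) • (E * T₁ * (T ^ j - E)) := fun j _ ↦ by
    simp only [sub_mul, mul_sub, smul_sub, smul_mul_assoc, mul_smul_comm, mul_assoc]
    abel
  have hexpand := h.sub_proj_eq hTE (j := 0) (p := m) (by lia)
  simp only [zero_add] at hexpand
  rw [hexpand, sum_congr rfl hterm, sum_sub_distrib, sum_sub_distrib, mul_sum, smul_sum]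
  simp only [mul_smul_comm, smul_smul]
  abel

theorem norm_sum_mul_remainder_le (h : IsBackwardProduct E L Q m) (he : 0 ≤ e)
    (hQ : ∀ k < m, ‖Q k - (T - (ε * k) • T₁)‖ ≤ e)
    (hK : ∀ p, ∑ i ∈ range p, ((i : ℝ) + 1) ^ 2 * ‖T ^ i - E‖ ≤ K) :
    ‖∑ j ∈ range m, L (j + 1) * ((Q j - (T - (ε * j) • T₁)) * (T ^ j - E))‖ ≤ e * K := by
  have hterm : ∀ j ∈ range m, ‖L (j + 1) * ((Q j - (T - (ε * j) • T₁)) * (T ^ j - E))‖ ≤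
      e * (((j : ℝ) + 1) ^ 2 * ‖T ^ j - E‖) := fun j hj ↦ by
    have hj := mem_range.1 hj
    have hone : (1 : ℝ) ≤ ((j : ℝ) + 1) ^ 2 := one_le_pow₀ (by simp)
    calc ‖L (j + 1) * ((Q j - (T - (ε * j) • T₁)) * (T ^ j - E))‖
        ≤ 1 * (e * ‖T ^ j - E‖) :=
          norm_mul_le_of_le (h.norm_le_one _ hj) (norm_mul_le_of_le (hQ j hj) le_rfl)
      _ ≤ ((j : ℝ) + 1) ^ 2 * (e * ‖T ^ j - E‖) := by gcongr
      _ = e * (((j : ℝ) + 1) ^ 2 * ‖T ^ j - E‖) := by ring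
  calc ‖∑ j ∈ range m, L (j + 1) * ((Q j - (T - (ε * j) • T₁)) * (T ^ j - E))‖
      ≤ ∑ j ∈ range m, e * (((j : ℝ) + 1) ^ 2 * ‖T ^ j - E‖) := norm_sum_le_of_le _ hterm
    _ ≤ e * K := by
      rw [← mul_sum]
      exact mul_le_mul_of_nonneg_left (hK m) he

theorem norm_smul_sub_proj_mul_le (h : IsBackwardProduct E L Q m) (hTE : T * E = E) (hε : 0 ≤ ε)
    (he : 0 ≤ e) (hQ : ∀ k < m, ‖Q k - (T - (ε * k) • T₁)‖ ≤ e)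
    (hK : ∀ p, ∑ i ∈ range p, ((i : ℝ) + 1) ^ 2 * ‖T ^ i - E‖ ≤ K) {j : ℕ} (hj : j < m) :
    ‖(ε * j) • ((L (j + 1) - E) * T₁ * (T ^ j - E))‖ ≤
      ε * ‖T₁‖ * (j * ‖T ^ j - E‖ * ‖T ^ (m - (j + 1)) - E‖ +
        (ε * ‖T₁‖ + e) * K * (((j : ℝ) + 1) ^ 2 * ‖T ^ j - E‖)) := by
  have hK₀ : 0 ≤ K := by simpa using hK 0
  have hindex : (j : ℝ) * ((j + 1 : ℕ) + 1) ≤ ((j : ℝ) + 1) ^ 2 := by push_cast; nlinarith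
  calc ‖(ε * j) • ((L (j + 1) - E) * T₁ * (T ^ j - E))‖
      = ε * j * ‖(L (j + 1) - E) * T₁ * (T ^ j - E)‖ := by
        rw [norm_smul, Real.norm_of_nonneg (by positivity)]
    _ ≤ ε * j * (‖L (j + 1) - E‖ * ‖T₁‖ * ‖T ^ j - E‖) := by
      gcongr
      exact norm_mul₃_le
    _ ≤ ε * j * ((‖T ^ (m - (j + 1)) - E‖ + ((j + 1 : ℕ) + 1) * (ε * ‖T₁‖ + e) * K) * ‖T₁‖ *
        ‖T ^ j - E‖) := by
      gcongr
      exact h.norm_sub_proj_le hTE hε he hQ hK hj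
    _ = ε * ‖T₁‖ * (j * ‖T ^ j - E‖ * ‖T ^ (m - (j + 1)) - E‖ +
        (ε * ‖T₁‖ + e) * K * (j * ((j + 1 : ℕ) + 1) * ‖T ^ j - E‖)) := by ring
    _ ≤ _ := by gcongr

theorem norm_sub_proj_add_smul_sum_le (h : IsBackwardProduct E L Q m) (hTE : T * E = E)
    (hε : 0 ≤ ε) (he : 0 ≤ e) (hQ : ∀ k < m, ‖Q k - (T - (ε * k) • T₁)‖ ≤ e)
    (hK : ∀ p, ∑ i ∈ range p, ((i : ℝ) + 1) ^ 2 * ‖T ^ i - E‖ ≤ K)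
    (hB : ∀ k, ‖T ^ k - E‖ ≤ C * ρ ^ k) (hρ : 0 ≤ ρ) :
    ‖L 0 - E + ε • (E * T₁ * ∑ j ∈ range m, (j : ℝ) • (T ^ j - E))‖ ≤
      C * ρ ^ m + e * K + ε * ‖T₁‖ * (C ^ 2 * ((m : ℝ) ^ 2 * ρ ^ (m - 1)) +
        (ε * ‖T₁‖ + e) * K ^ 2) := by
  have hK₀ : 0 ≤ K := by simpa using hK 0
  have hlast : ‖L m * (T ^ m - E)‖ ≤ 1 * (C * ρ ^ m) :=
    norm_mul_le_of_le (h.norm_le_one m le_rfl) (hB m)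
  have hdrift : ‖∑ j ∈ range m, (ε * j) • ((L (j + 1) - E) * T₁ * (T ^ j - E))‖ ≤
      ε * ‖T₁‖ * (C ^ 2 * ((m : ℝ) ^ 2 * ρ ^ (m - 1)) + (ε * ‖T₁‖ + e) * K ^ 2) := by
    refine (norm_sum_le_of_le _ fun j hj ↦
      h.norm_smul_sub_proj_mul_le hTE hε he hQ hK (mem_range.1 hj)).trans ?_
    rw [← mul_sum, sum_add_distrib, ← mul_sum, pow_two K, ← mul_assoc (ε * ‖T₁‖ + e) K K]
    gcongr
    · exact sum_mul_norm_mul_norm_le hB hρ m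
    · exact hK m
  rw [h.sub_proj_add_smul_sum_eq hTE]
  refine (norm_sub_le _ _).trans (add_le_add ((norm_add_le _ _).trans ?_) hdrift)
  rw [one_mul] at hlast
  exact add_le_add hlast (h.norm_sum_mul_remainder_le he hQ hK)

/-- `Q 1` and `T` both fix `E`, so the remainder at `k = 1` already sees `ε • (T₁ * E)`. -/
theorem norm_smul_mul_proj_le (h : IsBackwardProduct E L Q m) (hTE : T * E = E)
    (hQ : ∀ k < m, ‖Q k - (T - (ε * k) • T₁)‖ ≤ e) (hm : 1 < m) :
    ‖ε • (T₁ * E)‖ ≤ e * ‖E‖ := by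
  have hremainder : (Q 1 - (T - (ε * (1 : ℕ)) • T₁)) * E = ε • (T₁ * E) := by
    rw [sub_mul, sub_mul, h.factor_mul_proj 1 hm, hTE, Nat.cast_one, mul_one, smul_mul_assoc,
      sub_sub_cancel]
  rw [← hremainder]
  exact norm_mul_le_of_le (hQ 1 hm) le_rfl

theorem norm_sub_first_order_le (h : IsBackwardProduct E L Q m) (hTE : T * E = E)
    (hET : E * T = E) (hEE : E * E = E) (hZ : Z * (1 - T + E) = 1)
    (hε : 0 ≤ ε) (hQ : ∀ k < m, ‖Q k - (T - (ε * k) • T₁)‖ ≤ e)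
    (hK : ∀ p, ∑ i ∈ range p, ((i : ℝ) + 1) ^ 2 * ‖T ^ i - E‖ ≤ K)
    (hB : ∀ k, ‖T ^ k - E‖ ≤ C * ρ ^ k) (hρ : 0 ≤ ρ) (hρ' : ρ ≤ 1) (hm : 1 < m) :
    ‖L 0 - (E - ε • (E * T₁ * Z ^ 2 * T))‖ ≤
      C * ρ ^ m + e * K + ε * ‖T₁‖ * (C ^ 2 * ((m : ℝ) ^ 2 * ρ ^ (m - 1)) +
        (ε * ‖T₁‖ + e) * K ^ 2) + ‖E‖ * (e * ‖E‖) +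
        ε * (‖E * T₁ * Z ^ 2‖ * (2 * C * ((m : ℝ) ^ 2 * ρ ^ (m - 1)))) := by
  have he : 0 ≤ e := (norm_nonneg _).trans (hQ 1 hm)
  set tail := (m : ℝ) • (T ^ m - E) - ((m : ℝ) - 1) • (T ^ (m + 1) - E) with htail
  have hsplit : L 0 - (E - ε • (E * T₁ * Z ^ 2 * T)) =
      L 0 - E + ε • (E * T₁ * ∑ j ∈ range m, (j : ℝ) • (T ^ j - E)) + E * (ε • (T₁ * E)) +
        ε • (E * T₁ * Z ^ 2 * tail) := by
    rw [mul_sum_smul_pow_sub_proj hTE hET hEE hZ, ← htail, mul_smul_comm, ← mul_assoc]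
    module
  have htailnorm : ‖ε • (E * T₁ * Z ^ 2 * tail)‖ ≤
      ε * (‖E * T₁ * Z ^ 2‖ * (2 * C * ((m : ℝ) ^ 2 * ρ ^ (m - 1)))) := by
    rw [norm_smul, Real.norm_of_nonneg hε]
    gcongr
    exact norm_mul_le_of_le le_rfl (norm_smul_sub_smul_succ_le hB hρ hρ' hm.le)
  rw [hsplit]
  refine norm_add_le_of_le (norm_add_le_of_le ?_ ?_) htailnorm
  · exact h.norm_sub_proj_add_smul_sum_le hTE hε he hQ hK hB hρ
  · exact norm_mul_le_of_le le_rfl (h.norm_smul_mul_proj_le hTE hQ hm)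

theorem norm_sub_first_order_le_of_decay (h : IsBackwardProduct E L Q m) (hTE : T * E = E)
    (hET : E * T = E) (hEE : E * E = E) (hZ : Z * (1 - T + E) = 1)
    (hε : 0 ≤ ε) (hQ : ∀ k < m, ‖Q k - (T - (ε * k) • T₁)‖ ≤ e)
    (hK : ∀ p, ∑ i ∈ range p, ((i : ℝ) + 1) ^ 2 * ‖T ^ i - E‖ ≤ K)
    (hB : ∀ k, ‖T ^ k - E‖ ≤ C * ρ ^ k) (hρ : 0 ≤ ρ) (hρ' : ρ ≤ 1) (hm : 1 < m)
    (hdecay : (m : ℝ) ^ 2 * ρ ^ (m - 1) ≤ ε ^ 2) :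
    ‖L 0 - (E - ε • (E * T₁ * Z ^ 2 * T))‖ ≤
      C * ε ^ 2 + e * K + ε * ‖T₁‖ * (C ^ 2 * ε ^ 2 + (ε * ‖T₁‖ + e) * K ^ 2) +
        ‖E‖ * (e * ‖E‖) + ε * (‖E * T₁ * Z ^ 2‖ * (2 * C * ε ^ 2)) := by
  have hC : 0 ≤ C := by simpa using (norm_nonneg _).trans (hB 0)
  have hlast : ρ ^ m ≤ ε ^ 2 := by
    have hm' : (1 : ℝ) ≤ (m : ℝ) ^ 2 := one_le_pow₀ (by exact_mod_cast hm.le)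
    calc ρ ^ m ≤ ρ ^ (m - 1) := pow_le_pow_of_le_one hρ hρ' (Nat.sub_le _ _)
      _ ≤ (m : ℝ) ^ 2 * ρ ^ (m - 1) := le_mul_of_one_le_left (by positivity) hm'
      _ ≤ ε ^ 2 := hdecay
  refine (h.norm_sub_first_order_le hTE hET hEE hZ hε hQ hK hB hρ hρ' hm).trans ?_
  gcongr

end IsBackwardProduct

theorem exists_norm_sub_first_order_le {R : Type*} [NormedRing R] [NormedAlgebra ℝ R]
    {T E Z : R} {C ρ : ℝ} (hTE : T * E = E) (hET : E * T = E) (hEE : E * E = E)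
    (hZ : Z * (1 - T + E) = 1) (hB : ∀ k, ‖T ^ k - E‖ ≤ C * ρ ^ k) (hρ : 0 ≤ ρ) (hρ' : ρ < 1)
    (T₁ : R) :
    ∃ M : ℝ, ∀ (L Q : ℕ → R) (m : ℕ) (ε e : ℝ), IsBackwardProduct E L Q m → 1 < m → 0 ≤ ε → ε ≤ 1 →
      (m : ℝ) ^ 2 * ρ ^ (m - 1) ≤ ε ^ 2 → (∀ k < m, ‖Q k - (T - (ε * k) • T₁)‖ ≤ e) →
      ‖L 0 - (E - ε • (E * T₁ * Z ^ 2 * T))‖ ≤ M * (ε ^ 2 + e) := by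
  obtain ⟨K, hK⟩ := exists_forall_sum_sq_mul_norm_le hB hρ hρ'
  have hC : 0 ≤ C := by simpa using (norm_nonneg _).trans (hB 0)
  have hK₀ : 0 ≤ K := by simpa using hK 0
  set b := ‖E * T₁ * Z ^ 2‖
  refine ⟨C + K + ‖T₁‖ * (C ^ 2 + (‖T₁‖ + 1) * K ^ 2) + ‖E‖ ^ 2 + 2 * b * C,
    fun L Q m ε e h hm hε hε' hdecay hQ ↦
      (h.norm_sub_first_order_le_of_decay hTE hET hEE hZ hε hQ hK hB hρ hρ'.le hm hdecay).trans ?_⟩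
  have he : 0 ≤ e := (norm_nonneg _).trans (hQ 1 hm)
  calc C * ε ^ 2 + e * K + ε * ‖T₁‖ * (C ^ 2 * ε ^ 2 + (ε * ‖T₁‖ + e) * K ^ 2) +
          ‖E‖ * (e * ‖E‖) + ε * (b * (2 * C * ε ^ 2))
      = C * ε ^ 2 + e * K + (‖T₁‖ * C ^ 2 + 2 * b * C) * (ε * ε ^ 2) +
          ‖T₁‖ * K ^ 2 * (‖T₁‖ * ε ^ 2 + ε * e) + ‖E‖ ^ 2 * e := by ring
    _ ≤ C * (ε ^ 2 + e) + (ε ^ 2 + e) * K + (‖T₁‖ * C ^ 2 + 2 * b * C) * (ε ^ 2 + e) +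
          ‖T₁‖ * K ^ 2 * (‖T₁‖ * (ε ^ 2 + e) + (ε ^ 2 + e)) + ‖E‖ ^ 2 * (ε ^ 2 + e) := by
      have hεe : ε * e ≤ ε ^ 2 + e := by nlinarith [sq_nonneg ε]
      have hεε : ε * ε ^ 2 ≤ ε ^ 2 + e := by nlinarith [sq_nonneg ε]
      have hleft : ε ^ 2 ≤ ε ^ 2 + e := le_add_of_nonneg_right he
      have hright : e ≤ ε ^ 2 + e := le_add_of_nonneg_left (sq_nonneg ε)
      have : 0 ≤ b := norm_nonneg _
      gcongr
    _ = _ := by ring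

theorem exists_le_mul_pow_of_antitone {u : ℕ → ℝ} {N : ℕ} {θ : ℝ} (hu : Antitone u)
    (hu₀ : ∀ k, 0 ≤ u k) (hN : N ≠ 0) (hθ : 0 < θ) (hθ' : θ < 1)
    (hcontract : ∀ k, u (k + N) ≤ θ * u k) :
    ∃ C ρ : ℝ, 0 < ρ ∧ ρ < 1 ∧ ∀ k, u k ≤ C * ρ ^ k := by
  set ρ := θ ^ (N⁻¹ : ℝ)
  have hρ : 0 < ρ := Real.rpow_pos_of_pos hθ _
  have hρ' : ρ < 1 := Real.rpow_lt_one hθ.le hθ' (by positivity)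
  have hρN : ρ ^ N = θ := Real.rpow_inv_natCast_pow hθ.le hN
  refine ⟨u 0 / θ, ρ, hρ, hρ', fun k ↦ ?_⟩
  induction k using Nat.strong_induction_on with
  | _ k ih =>
    rcases lt_or_ge k N with hk | hk
    · calc u k ≤ u 0 := hu k.zero_le
        _ = u 0 / θ * ρ ^ N := by rw [hρN, div_mul_cancel₀ _ hθ.ne']
        _ ≤ u 0 / θ * ρ ^ k := mul_le_mul_of_nonneg_left
          (pow_le_pow_of_le_one hρ.le hρ'.le hk.le) (div_nonneg (hu₀ 0) hθ.le)
    · calc u k = u (k - N + N) := by rw [Nat.sub_add_cancel hk]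
        _ ≤ θ * u (k - N) := hcontract _
        _ ≤ θ * (u 0 / θ * ρ ^ (k - N)) :=
          mul_le_mul_of_nonneg_left (ih _ (by lia)) hθ.le
        _ = u 0 / θ * (ρ ^ N * ρ ^ (k - N)) := by rw [hρN]; ring
        _ = u 0 / θ * ρ ^ k := by rw [pow_mul_pow_sub ρ hk]

section StochasticMatrices

attribute [local instance] Matrix.linftyOpNormedRing Matrix.linftyOpNormedAlgebra

variable {S : Type*} [Fintype S] {Q M : Matrix S S ℝ} {π : S → ℝ}

theorem mul_replicateRow_of_row_sum_eq_one (hQ : ∀ x, ∑ y, Q x y = 1) (v : S → ℝ) :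
    Q * replicateRow S v = replicateRow S v := by
  ext x y
  simp only [Matrix.mul_apply, replicateRow_apply, ← sum_mul, hQ, one_mul]

variable [DecidableEq S]

theorem norm_eq_matNorm (A : Matrix S S ℝ) : ‖A‖ = matNorm A := by
  rw [Matrix.linfty_opNorm_def, Finset.sup_univ_eq_ciSup, matNorm, NNReal.coe_iSup]
  simp

theorem isStochastic_iff_mem_rowStochastic :
    IsStochastic Q ↔ Q ∈ rowStochastic ℝ S :=
  mem_rowStochastic_iff_sum.symm

theorem norm_le_of_nonneg_of_sum_eq {c : ℝ} (hc : 0 ≤ c) (hQ : ∀ x y, 0 ≤ Q x y)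
    (hsum : ∀ x, ∑ y, Q x y = c) : ‖Q‖ ≤ c := by
  rw [norm_eq_matNorm, matNorm]
  exact Real.iSup_le (fun x ↦ by simp only [abs_of_nonneg (hQ x _), hsum, le_refl]) hc

namespace IsStochastic

theorem norm_le_one (hQ : IsStochastic Q) : ‖Q‖ ≤ 1 :=
  norm_le_of_nonneg_of_sum_eq zero_le_one hQ.1 hQ.2

/-- Subtracting `δ` from the column `y₀` leaves nonnegative rows of mass `1 - δ` (Doeblin), and
does not change the product because the rows of `M` sum to zero. -/
theorem norm_mul_le_of_column_ge (hQ : IsStochastic Q) {δ : ℝ} {y₀ : S} (hδ : δ ≤ 1)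
    (hcol : ∀ x, δ ≤ Q x y₀) (hM : ∀ x, ∑ y, M x y = 0) : ‖M * Q‖ ≤ (1 - δ) * ‖M‖ := by
  set F := replicateRow S (Pi.single y₀ δ)
  have hMF : M * F = 0 := by
    ext x y
    simp only [F, Matrix.mul_apply, replicateRow_apply, ← sum_mul, hM, zero_mul, Matrix.zero_apply]
  have hrest : ‖Q - F‖ ≤ 1 - δ := by
    refine norm_le_of_nonneg_of_sum_eq (sub_nonneg.2 hδ) (fun x y ↦ ?_) fun x ↦ ?_
    · rcases eq_or_ne y y₀ with rfl | hy
      · simpa [F] using hcol x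
      · simpa [F, hy] using hQ.1 x y
    · simp [F, sum_sub_distrib, hQ.2]
  calc ‖M * Q‖ = ‖M * (Q - F)‖ := by rw [mul_sub, hMF, sub_zero]
    _ ≤ (1 - δ) * ‖M‖ := (norm_mul_le_of_le le_rfl hrest).trans_eq (mul_comm _ _)

theorem pow (hQ : IsStochastic Q) (k : ℕ) : IsStochastic (Q ^ k) :=
  isStochastic_iff_mem_rowStochastic.2 (pow_mem (isStochastic_iff_mem_rowStochastic.1 hQ) k)

theorem norm_pow_add_sub_le (hQ : IsStochastic Q) (hπ : ∑ x, π x = 1) (hπQ : π ᵥ* Q = π)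
    {N : ℕ} {δ : ℝ} {y₀ : S} (hδ : δ ≤ 1) (hcol : ∀ x, δ ≤ (Q ^ N) x y₀) (k : ℕ) :
    ‖Q ^ (k + N) - replicateRow S π‖ ≤ (1 - δ) * ‖Q ^ k - replicateRow S π‖ := by
  have hproj : replicateRow S π * Q ^ N = replicateRow S π :=
    proj_mul_pow (by rw [← replicateRow_vecMul, hπQ]) N
  have hfactor : Q ^ (k + N) - replicateRow S π = (Q ^ k - replicateRow S π) * Q ^ N := by
    rw [sub_mul, hproj, pow_add]
  rw [hfactor]
  refine (hQ.pow N).norm_mul_le_of_column_ge hδ hcol fun x ↦ ?_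
  simp only [Matrix.sub_apply, replicateRow_apply, sum_sub_distrib, (hQ.pow k).2, hπ, sub_self]

theorem exists_norm_pow_sub_le (hQ : IsStochastic Q) (hpos : ∃ N y, ∀ x, 0 < (Q ^ N) x y)
    (hπ : ∑ x, π x = 1) (hπQ : π ᵥ* Q = π) :
    ∃ C ρ : ℝ, 0 < ρ ∧ ρ < 1 ∧ ∀ k, ‖Q ^ k - replicateRow S π‖ ≤ C * ρ ^ k := by
  obtain ⟨N, y₀, hpos⟩ := hpos
  have : Nonempty S := ⟨y₀⟩
  obtain ⟨x₀, hx₀⟩ := Finite.exists_min fun x ↦ (Q ^ N) x y₀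
  have hδ : 0 < min ((Q ^ N) x₀ y₀) 2⁻¹ := lt_min (hpos x₀) (by norm_num)
  have hδ' : min ((Q ^ N) x₀ y₀) 2⁻¹ < 1 := (min_le_right _ _).trans_lt (by norm_num)
  have hanti : Antitone fun k ↦ ‖Q ^ k - replicateRow S π‖ := antitone_nat_of_succ_le fun k ↦ by
    simpa using hQ.norm_pow_add_sub_le hπ hπQ (N := 1) (y₀ := y₀) zero_le_one
      (fun x ↦ by simpa using hQ.1 x y₀) k
  refine exists_le_mul_pow_of_antitone (N := N + 1) hanti (fun _ ↦ norm_nonneg _) N.succ_ne_zero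
    (sub_pos.2 hδ') (sub_lt_self _ hδ) fun k ↦ (hanti (by lia : k + N ≤ k + (N + 1))).trans ?_
  exact hQ.norm_pow_add_sub_le hπ hπQ hδ'.le (fun x ↦ (min_le_left _ _).trans (hx₀ x)) k

end IsStochastic

theorem inv_one_sub_add_proj_mul_cancel {T E : Matrix S S ℝ} (hTE : T * E = E) (hET : E * T = E)
    (hEE : E * E = E) (hlim : Tendsto (fun k ↦ ‖T ^ k - E‖) atTop (𝓝 0)) :
    (1 - T + E)⁻¹ * (1 - T + E) = 1 := by
  obtain ⟨k, hk⟩ := (hlim.eventually_lt_const one_pos).exists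
  have hunit : IsUnit (1 - T + E) := by
    refine isUnit_of_mul_isUnit_left (y := E + ∑ j ∈ range k, (T ^ j - E)) ?_
    rw [one_sub_add_proj_mul_proj_add_sum hTE hET hEE]
    exact isUnit_one_sub_of_norm_lt_one hk
  exact nonsing_inv_mul _ ((isUnit_iff_isUnit_det _).1 hunit)

theorem prodP_succ (P : ℕ → Matrix S S ℝ) (j : ℕ) : prodP P (j + 1) = prodP P j * P (j + 1) := by
  rw [prodP, List.range_succ, List.map_append, List.prod_append, List.map_singleton,
    List.prod_singleton, prodP]

theorem isStochastic_prodP {P : ℕ → Matrix S S ℝ} {n : ℕ}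
    (hP : ∀ k, 1 ≤ k → k ≤ n → IsStochastic (P k)) {j : ℕ} (hj : j ≤ n) :
    IsStochastic (prodP P j) := by
  refine isStochastic_iff_mem_rowStochastic.2 (Submonoid.list_prod_mem _ fun A hA ↦ ?_)
  obtain ⟨i, hi, rfl⟩ := List.mem_map.1 hA
  have hi := List.mem_range.1 hi
  exact isStochastic_iff_mem_rowStochastic.1 (hP _ (by lia) (by lia))

theorem isBackwardProduct_prodP {P : ℕ → Matrix S S ℝ} {n m : ℕ}
    (hP : ∀ k, 1 ≤ k → k ≤ n → IsStochastic (P k)) (hmn : m ≤ n) (π : S → ℝ) :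
    IsBackwardProduct (replicateRow S π) (fun k ↦ prodP P (n - k)) (fun k ↦ P (n - k)) m where
  eq_succ_mul k hk := by rw [show n - k = n - (k + 1) + 1 by lia, prodP_succ]
  norm_le_one k _ := (isStochastic_prodP hP (n.sub_le k)).norm_le_one
  mul_proj k _ := mul_replicateRow_of_row_sum_eq_one (isStochastic_prodP hP (n.sub_le k)).2 π
  factor_mul_proj k hk := mul_replicateRow_of_row_sum_eq_one (hP _ (by lia) (by lia)).2 π

end StochasticMatrices

section TerminalHorizon

theorem tendsto_log_one_div_nhdsGT_zero :
    Tendsto (fun ε : ℝ ↦ Real.log (1 / ε)) (𝓝[>] 0) atTop := by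
  simpa only [one_div, Function.comp_def] using
    Real.tendsto_log_atTop.comp tendsto_inv_nhdsGT_zero

variable {m n : ℝ → ℕ} {a : ℝ → ℝ} {ρ : ℝ}

theorem tendsto_atTop_of_tendsto_div_log
    (hm : Tendsto (fun ε ↦ (m ε : ℝ) / Real.log (1 / ε)) (𝓝[>] 0) atTop) :
    Tendsto m (𝓝[>] 0) atTop := by
  rw [← tendsto_natCast_atTop_iff (R := ℝ)]
  refine (hm.atTop_mul_atTop₀ tendsto_log_one_div_nhdsGT_zero).congr' ?_
  filter_upwards [tendsto_log_one_div_nhdsGT_zero.eventually_gt_atTop 0] with ε hlog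
  exact div_mul_cancel₀ _ hlog.ne'

theorem eventually_pow_le_pow_of_tendsto_div_log
    (hm : Tendsto (fun ε ↦ (m ε : ℝ) / Real.log (1 / ε)) (𝓝[>] 0) atTop)
    (hρ : 0 < ρ) (hρ' : ρ < 1) (p : ℕ) : ∀ᶠ ε in 𝓝[>] 0, ρ ^ m ε ≤ ε ^ p := by
  have hlogρ : 0 < -Real.log ρ := neg_pos.2 (Real.log_neg hρ hρ')
  filter_upwards [hm.eventually_ge_atTop (p / -Real.log ρ),
    tendsto_log_one_div_nhdsGT_zero.eventually_gt_atTop 0, self_mem_nhdsWithin]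
    with ε hratio hlog hε
  rw [div_le_div_iff₀ hlogρ hlog, one_div, Real.log_inv] at hratio
  rw [← Real.log_le_log_iff (pow_pos hρ _) (pow_pos hε _), Real.log_pow, Real.log_pow]
  linarith

theorem eventually_sq_mul_pow_pred_le_sqrt_pow (hρ : 0 < ρ) (hρ' : ρ < 1) :
    ∀ᶠ k : ℕ in atTop, (k : ℝ) ^ 2 * ρ ^ (k - 1) ≤ √ρ ^ k := by
  have hsqrt : √ρ < 1 := by rwa [Real.sqrt_lt' one_pos, one_pow]
  have hlim := tendsto_pow_const_mul_const_pow_of_lt_one 2 (Real.sqrt_nonneg ρ) hsqrt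
  filter_upwards [hlim.eventually_le_const hρ, eventually_ge_atTop 1] with k hk hk₁
  have hsplit : ρ ^ (k - 1) * ρ = √ρ ^ k * √ρ ^ k := by
    rw [← pow_succ, Nat.sub_add_cancel hk₁, ← mul_pow, Real.mul_self_sqrt hρ.le]
  refine le_of_mul_le_mul_right ?_ hρ
  calc (k : ℝ) ^ 2 * ρ ^ (k - 1) * ρ = (k : ℝ) ^ 2 * √ρ ^ k * √ρ ^ k := by
        rw [mul_assoc, hsplit, mul_assoc]
    _ ≤ ρ * √ρ ^ k := by gcongr
    _ = √ρ ^ k * ρ := mul_comm _ _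

theorem eventually_sq_mul_pow_pred_le_sq
    (hm : Tendsto (fun ε ↦ (m ε : ℝ) / Real.log (1 / ε)) (𝓝[>] 0) atTop)
    (hρ : 0 < ρ) (hρ' : ρ < 1) :
    ∀ᶠ ε in 𝓝[>] 0, (m ε : ℝ) ^ 2 * ρ ^ (m ε - 1) ≤ ε ^ 2 := by
  have hsqrt : √ρ < 1 := by rwa [Real.sqrt_lt' one_pos, one_pow]
  filter_upwards [eventually_pow_le_pow_of_tendsto_div_log hm (Real.sqrt_pos.2 hρ) hsqrt 2,
    (tendsto_atTop_of_tendsto_div_log hm).eventually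
      (eventually_sq_mul_pow_pred_le_sqrt_pow hρ hρ')] with ε hpow hsq
  exact hsq.trans hpow

theorem mcut_le (n : ℝ → ℕ) (a : ℝ → ℝ) (ε : ℝ) : mcut n a ε ≤ n ε :=
  Nat.floor_le_of_le ((min_le_left _ _).trans (half_le_self (Nat.cast_nonneg _)))

theorem tendsto_mcut_div_log
    (hn : Tendsto (fun ε ↦ (n ε : ℝ) / Real.log (1 / ε)) (𝓝[>] 0) atTop)
    (ha : Tendsto a (𝓝[>] 0) atTop) :
    Tendsto (fun ε ↦ (mcut n a ε : ℝ) / Real.log (1 / ε)) (𝓝[>] 0) atTop := by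
  have hmin : Tendsto (fun ε ↦ min ((n ε : ℝ) / Real.log (1 / ε) / 2) (a ε) - 1)
      (𝓝[>] 0) atTop :=
    tendsto_atTop_add_const_right _ (-1)
      (tendsto_inf_atTop _ (hn.atTop_div_const two_pos) ha)
  refine tendsto_atTop_mono' _ ?_ hmin
  filter_upwards [tendsto_log_one_div_nhdsGT_zero.eventually_ge_atTop 1] with ε hlog
  have hlog₀ : 0 < Real.log (1 / ε) := one_pos.trans_le hlog
  rw [le_div_iff₀ hlog₀, sub_mul, one_mul, min_mul_of_nonneg _ _ hlog₀.le, div_right_comm,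
    div_mul_cancel₀ _ hlog₀.ne']
  exact (sub_le_sub_left hlog _).trans (Nat.sub_one_lt_floor _).le

theorem isBigO_sq_add_mul_sq_mul_sq
    (hm : Tendsto (fun ε ↦ (m ε : ℝ) / Real.log (1 / ε)) (𝓝[>] 0) atTop) (c : ℝ) :
    (fun ε ↦ ε ^ 2 + c * ε ^ 2 * (m ε : ℝ) ^ 2) =O[𝓝[>] 0] fun ε ↦ ε ^ 2 * (m ε : ℝ) ^ 3 := by
  have hpow : ∀ p ≤ 3, (fun ε ↦ ε ^ 2 * (m ε : ℝ) ^ p) =O[𝓝[>] 0]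
      fun ε ↦ ε ^ 2 * (m ε : ℝ) ^ 3 := fun p hp ↦ by
    refine (isBigO_refl _ _).mul (IsBigO.of_bound 1 ?_)
    filter_upwards [(tendsto_atTop_of_tendsto_div_log hm).eventually_ge_atTop 1] with ε hε
    rw [norm_pow, norm_pow, one_mul]
    exact pow_le_pow_right₀ (by simpa using hε) hp
  simpa [mul_assoc] using (hpow 0 (by lia)).add ((hpow 2 (by lia)).const_mul_left c)

theorem exists_pos_bound_of_isBigO_nhdsGT_zero {f g : ℝ → ℝ} (h : f =O[𝓝[>] 0] g) :
    ∃ c > 0, ∃ ε₁ > 0, ∀ ε, 0 < ε → ε < ε₁ → |f ε| ≤ c * |g ε| := by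
  obtain ⟨c, hc, hbound⟩ := h.exists_pos
  obtain ⟨ε₁, hε₁, hsubset⟩ := mem_nhdsGT_iff_exists_Ioo_subset.1 hbound.bound
  exact ⟨c, hc, ε₁, hε₁, fun ε hε hε' ↦ hsubset ⟨hε, hε'⟩⟩

end TerminalHorizon

section TerminalExpansion

attribute [local instance] Matrix.linftyOpNormedRing Matrix.linftyOpNormedAlgebra

variable {S : Type*} [Fintype S]

theorem dotProduct_replicateRow_mulVec {μ : S → ℝ} (hμ : ∑ x, μ x = 1) (π r : S → ℝ) :
    μ ⬝ᵥ (replicateRow S π *ᵥ r) = π ⬝ᵥ r := by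
  simp only [replicateRow_mulVec_eq_const, dotProduct, Function.const_apply, ← sum_mul, hμ,
    one_mul]

variable [DecidableEq S]

theorem isBigO_dotProduct_mulVec {α : Type*} {l : Filter α} (A : α → Matrix S S ℝ)
    (μ r : S → ℝ) : (fun ε ↦ μ ⬝ᵥ (A ε *ᵥ r)) =O[l] A := by
  refine IsBigO.of_bound ((∑ x, |μ x|) * ‖r‖) (Eventually.of_forall fun ε ↦ ?_)
  calc ‖μ ⬝ᵥ (A ε *ᵥ r)‖ ≤ ∑ x, |μ x| * ‖A ε *ᵥ r‖ :=
        norm_sum_le_of_le _ fun x _ ↦ norm_mul_le_of_le le_rfl (norm_le_pi_norm _ x)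
    _ = (∑ x, |μ x|) * ‖A ε *ᵥ r‖ := (sum_mul _ _ _).symm
    _ ≤ (∑ x, |μ x|) * (‖A ε‖ * ‖r‖) := by
      gcongr
      exact linfty_opNorm_mulVec _ _
    _ = (∑ x, |μ x|) * ‖r‖ * ‖A ε‖ := by ring

theorem prodP_sub_first_order_isBigO {n m : ℝ → ℕ} {e : ℝ → ℝ}
    {P : ℕ → ℝ → Matrix S S ℝ} {Pt Pt1 : Matrix S S ℝ} {π : S → ℝ}
    (hm : Tendsto (fun ε ↦ (m ε : ℝ) / Real.log (1 / ε)) (𝓝[>] 0) atTop)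
    (hmn : ∀ᶠ ε in 𝓝[>] 0, m ε ≤ n ε)
    (hP : ∀ᶠ ε in 𝓝[>] 0, ∀ k, 1 ≤ k → k ≤ n ε → IsStochastic (P k ε))
    (hPt : IsStochastic Pt) (hpos : ∃ N y, ∀ x, 0 < (Pt ^ N) x y)
    (hπ : ∑ x, π x = 1) (hπP : π ᵥ* Pt = π)
    (happrox : ∀ᶠ ε in 𝓝[>] 0, ∀ k < m ε, ‖P (n ε - k) ε - (Pt - (ε * k) • Pt1)‖ ≤ e ε) :
    (fun ε ↦ prodP (fun k ↦ P k ε) (n ε) -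
      (replicateRow S π - ε • (replicateRow S π * Pt1 *
        (1 - Pt + replicateRow S π)⁻¹ ^ 2 * Pt))) =O[𝓝[>] 0] fun ε ↦ ε ^ 2 + e ε := by
  have hTE := mul_replicateRow_of_row_sum_eq_one hPt.2 π
  have hET : replicateRow S π * Pt = replicateRow S π := by rw [← replicateRow_vecMul, hπP]
  have hEE := mul_replicateRow_of_row_sum_eq_one (Q := replicateRow S π) (fun _ ↦ hπ) π
  obtain ⟨C, ρ, hρ, hρ', hmixing⟩ := hPt.exists_norm_pow_sub_le hpos hπ hπP
  have hlim : Tendsto (fun k ↦ ‖Pt ^ k - replicateRow S π‖) atTop (𝓝 0) :=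
    squeeze_zero (fun _ ↦ norm_nonneg _) hmixing
      (by simpa using (tendsto_pow_atTop_nhds_zero_of_lt_one hρ.le hρ').const_mul C)
  obtain ⟨M, hM⟩ := exists_norm_sub_first_order_le hTE hET hEE
    (inv_one_sub_add_proj_mul_cancel hTE hET hEE hlim) hmixing hρ.le hρ' Pt1
  refine IsBigO.of_bound |M| ?_
  filter_upwards [hmn, hP, happrox, eventually_sq_mul_pow_pred_le_sq hm hρ hρ',
    (tendsto_atTop_of_tendsto_div_log hm).eventually_gt_atTop 1, Ioo_mem_nhdsGT one_pos]
    with ε hmn hP happrox hdecay hm₁ hε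
  refine (hM _ _ _ ε (e ε) (isBackwardProduct_prodP hP hmn π) hm₁ hε.1.le hε.2.le hdecay
    happrox).trans ((le_abs_self _).trans ?_)
  rw [abs_mul, Real.norm_eq_abs]

theorem transient_expectation_terminal_expansion_general
    (n m : ℝ → ℕ) (e : ℝ → ℝ)
    (hm : Tendsto (fun ε ↦ (m ε : ℝ) / Real.log (1 / ε)) (𝓝[>] 0) atTop)
    (hmn : ∀ᶠ ε in 𝓝[>] 0, m ε ≤ n ε)
    (P : ℕ → ℝ → Matrix S S ℝ) (Pt Pt1 : Matrix S S ℝ)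
    (hP : ∀ᶠ ε in 𝓝[>] 0, ∀ k, 1 ≤ k → k ≤ n ε → IsStochastic (P k ε))
    (hPt : IsStochastic Pt) (hpos : ∃ N y, ∀ x, 0 < (Pt ^ N) x y)
    (π : S → ℝ) (hπ : ∑ x, π x = 1) (hπP : π ᵥ* Pt = π)
    (happrox : ∀ᶠ ε in 𝓝[>] 0, ∀ k < m ε,
      matNorm (P (n ε - k) ε - (Pt - (ε * k) • Pt1)) ≤ e ε)
    (μ r : S → ℝ) (hμ : ∑ x, μ x = 1) :
    (fun ε ↦ μ ⬝ᵥ (prodP (fun k ↦ P k ε) (n ε) *ᵥ r) -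
      (π ⬝ᵥ r - ε * (π ⬝ᵥ ((Pt1 * (1 - Pt + replicateRow S π)⁻¹ ^ 2 * Pt) *ᵥ r))))
      =O[𝓝[>] 0] fun ε ↦ ε ^ 2 + e ε := by
  simp only [← norm_eq_matNorm] at happrox
  refine IsBigO.congr_left ((isBigO_dotProduct_mulVec _ μ r).trans
    (prodP_sub_first_order_isBigO hm hmn hP hPt hpos hπ hπP happrox)) fun ε ↦ ?_
  have hfirst : μ ⬝ᵥ ((replicateRow S π * Pt1 * (1 - Pt + replicateRow S π)⁻¹ ^ 2 * Pt) *ᵥ r) =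
      π ⬝ᵥ ((Pt1 * (1 - Pt + replicateRow S π)⁻¹ ^ 2 * Pt) *ᵥ r) := by
    rw [mul_assoc, mul_assoc, ← mulVec_mulVec, dotProduct_replicateRow_mulVec hμ, ← mul_assoc]
  rw [sub_mulVec, sub_mulVec, smul_mulVec, dotProduct_sub, dotProduct_sub, dotProduct_smul,
    smul_eq_mul, hfirst, dotProduct_replicateRow_mulVec hμ]

end TerminalExpansion

/-- Theorem 5: first-order approximation of μ P₁(ε)⋯P_{n(ε)}(ε) r for long horizons,
expanding around the final transition matrix P̃, with error O(ε² m(ε)³) as ε ↓ 0. -/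
theorem transient_expectation_terminal_expansion
    {S : Type*} [Fintype S] [Nonempty S] [DecidableEq S]
    (ε₀ : ℝ) (hε₀ : 0 < ε₀) (n : ℝ → ℕ) (a : ℝ → ℝ)
    (hn : Tendsto (fun ε => (n ε : ℝ) / Real.log (1/ε)) (𝓝[>] (0:ℝ)) atTop)
    (ha0 : ∀ ε : ℝ, 0 < ε → ε < ε₀ → 0 < a ε)
    (ha : Tendsto a (𝓝[>] (0:ℝ)) atTop)
    (P : ℕ → ℝ → Matrix S S ℝ) (Pt Pt1 : Matrix S S ℝ)
    (hstoch : ∀ ε : ℝ, 0 < ε → ε < ε₀ → ∀ k : ℕ, 1 ≤ k → k ≤ n ε → IsStochastic (P k ε))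
    (hPt : IsStochastic Pt)
    (hirr : ∃ N : ℕ, ∀ x y, 0 < (Pt ^ N) x y)
    (π : S → ℝ) (hπ0 : ∀ x, 0 ≤ π x) (hπ1 : ∑ x, π x = 1) (hπP : π ᵥ* Pt = π)
    (happrox : ∃ c > (0:ℝ), ∃ ε₁ > (0:ℝ), ∀ ε : ℝ, 0 < ε → ε < ε₁ →
      ∀ k : ℕ, k ≤ mcut n a ε →
        matNorm (P (n ε - k) ε - (Pt - (ε * k) • Pt1)) ≤ c * ε ^ 2 * (mcut n a ε : ℝ) ^ 2) :
    ∀ μ r : S → ℝ, (∀ x, 0 ≤ μ x) → (∑ x, μ x = 1) →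
      ∃ c > (0:ℝ), ∃ ε₂ > (0:ℝ), ∀ ε : ℝ, 0 < ε → ε < ε₂ →
        |μ ⬝ᵥ (prodP (fun k => P k ε) (n ε) *ᵥ r) -
            (π ⬝ᵥ r -
              ε * (π ⬝ᵥ ((Pt1 * ((1 - Pt + Matrix.of fun _ y => π y)⁻¹) ^ 2 * Pt) *ᵥ r)))|
          ≤ c * ε ^ 2 * (mcut n a ε : ℝ) ^ 3 := by
  intro μ r _ hμ
  obtain ⟨c, _, ε₁, hε₁, happrox⟩ := happrox
  have hpos : ∃ N y, ∀ x, 0 < (Pt ^ N) x y :=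
    hirr.imp fun _ h ↦ ⟨Classical.arbitrary S, fun x ↦ h x _⟩
  have hm := tendsto_mcut_div_log hn ha
  have hexpansion := transient_expectation_terminal_expansion_general n (mcut n a)
    (fun ε ↦ c * ε ^ 2 * (mcut n a ε : ℝ) ^ 2) hm (Eventually.of_forall (mcut_le n a)) P Pt Pt1
    (by filter_upwards [Ioo_mem_nhdsGT hε₀] with ε hε using hstoch ε hε.1 hε.2) hPt hpos π hπ1 hπP
    (by filter_upwards [Ioo_mem_nhdsGT hε₁] with ε hε k hk using happrox ε hε.1 hε.2 k hk.le)
    μ r hμ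
  obtain ⟨C, hC, ε₂, hε₂, hbound⟩ :=
    exists_pos_bound_of_isBigO_nhdsGT_zero (hexpansion.trans (isBigO_sq_add_mul_sq_mul_sq hm c))
  refine ⟨C, hC, ε₂, hε₂, fun ε hε hε' ↦ (hbound ε hε hε').trans_eq ?_⟩
  rw [abs_of_nonneg (by positivity), mul_assoc]
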